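/- arXiv:2512.15391 — 2 statements merged into one kernel-verified Lean document; each statement's English description precedes it below -/
import Mathlib

section
/- (Definability of the universal bisimulation quantifier gives left uniform interpolants.) Let p be a propositional variable, q̄ a finite set of variables not containing p, φ a formula with variables among {p} ∪ q̄, and α a formula with variables among q̄. If ⟦α⟧_{p,q̄} = A_p(⟦φ⟧_{p,q̄}), then α ⊨ φ, and for every formula ψ not containing p, ψ ⊨ φ implies ψ ⊨ α; i.e., α is a left uniform interpolant of φ with respect to p. -/
/-!
The entailment `α ⊨ φ` holds because every pointed model is bisimilar to itself. For the second half,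
let `X` force a formula `ψ` without `p`, and let `Z` be a q̄-bisimulation linking `X` to a finite
pointed model `Y`; one must show that `Y` forces `φ`. Since `ψ` may contain variables outside q̄, it
need not hold at `Y`, so the two models are amalgamated: the worlds of `amalg` are the `Z`-related
pairs, ordered componentwise, with the variables of `{p} ∪ q̄` read off in `Y` and all others in `X`.
The projection to `X` is a bisimulation for every variable but `p` (on q̄ the two valuations agree
along `Z`), and the projection to `Y` is a bisimulation for `{p} ∪ q̄`. Forcing is
bisimulation invariant (`forces_iff_of_isBisim`), so `ψ` passes from `X` to the amalgam, where it
entails `φ`, and `φ` passes from the amalgam to `Y`.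
-/

/-- Intuitionistic propositional formulas over variables indexed by `ℕ`. -/
inductive IPForm : Type
  | var : ℕ → IPForm
  | bot : IPForm
  | conj : IPForm → IPForm → IPForm
  | disj : IPForm → IPForm → IPForm
  | impl : IPForm → IPForm → IPForm

/-- The set of propositional variables occurring in a formula. -/
def IPForm.vars : IPForm → Finset ℕ
  | .var p => {p}
  | .bot => ∅
  | .conj a b => a.vars ∪ b.vars
  | .disj a b => a.vars ∪ b.vars
  | .impl a b => a.vars ∪ b.vars

/-- The implication-nesting depth of a formula. -/
def IPForm.depth : IPForm → ℕ
  | .var _ => 0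
  | .bot => 0
  | .conj a b => max a.depth b.depth
  | .disj a b => max a.depth b.depth
  | .impl a b => max a.depth b.depth + 1

/-- An intuitionistic Kripke model: a preorder together with a persistent
valuation of the propositional variables. -/
structure KModel where
  W : Type
  rel : W → W → Prop
  refl : ∀ w, rel w w
  trans : ∀ {u v w}, rel u v → rel v w → rel u w
  val : ℕ → W → Prop
  mono : ∀ {p u v}, rel u v → val p u → val p v

/-- The intuitionistic forcing relation. -/
def KModel.Forces (M : KModel) : M.W → IPForm → Prop
  | w, .var p => M.val p w
  | _, .bot => False
  | w, .conj a b => M.Forces w a ∧ M.Forces w b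
  | w, .disj a b => M.Forces w a ∨ M.Forces w b
  | w, .impl a b => ∀ v, M.rel w v → M.Forces v a → M.Forces v b

/-- Semantic entailment over finite Kripke models. -/
def Entails (φ ψ : IPForm) : Prop :=
  ∀ (M : KModel), Finite M.W → ∀ w : M.W, M.Forces w φ → M.Forces w ψ

/-- A q̄-bisimulation between two Kripke models. -/
def IsBisim (q : Set ℕ) (M M' : KModel) (Z : M.W → M'.W → Prop) : Prop :=
  ∀ w w', Z w w' →
    (∀ p ∈ q, (M.val p w ↔ M'.val p w')) ∧
    (∀ v, M.rel w v → ∃ v', M'.rel w' v' ∧ Z v v') ∧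
    (∀ v', M'.rel w' v' → ∃ v, M.rel w v ∧ Z v v')

/-- Two pointed models are q̄-bisimilar if some q̄-bisimulation relates them. -/
def Bisimilar (q : Set ℕ) (M : KModel) (w : M.W) (M' : KModel) (w' : M'.W) : Prop :=
  ∃ Z, IsBisim q M M' Z ∧ Z w w'

/-- A finite pointed Kripke model. -/
structure PKModel where
  M : KModel
  fin : Finite M.W
  w : M.W

/-- The class of finite pointed models forcing a formula φ. -/
def semC (φ : IPForm) : Set PKModel := {X | X.M.Forces X.w φ}

/-- The existential bisimulation quantifier: the class of finite pointed models
q̄-bisimilar to some member of K. -/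
def Ep (q : Finset ℕ) (K : Set PKModel) : Set PKModel :=
  {X | ∃ Y ∈ K, Bisimilar ↑q X.M X.w Y.M Y.w}

/-- The universal bisimulation quantifier: the class of finite pointed models
all of whose q̄-bisimilar companions are in K. -/
def Ap (q : Finset ℕ) (K : Set PKModel) : Set PKModel :=
  {X | ∀ Y : PKModel, Bisimilar ↑q X.M X.w Y.M Y.w → Y ∈ K}

theorem forces_iff_of_isBisim {q : Set ℕ} {M M' : KModel} {Z : M.W → M'.W → Prop}
    (hZ : IsBisim q M M' Z) (φ : IPForm) (hφ : ∀ r ∈ φ.vars, r ∈ q) {w : M.W} {w' : M'.W}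
    (hw : Z w w') : M.Forces w φ ↔ M'.Forces w' φ := by
  induction φ generalizing w w' with
  | var r => exact (hZ w w' hw).1 r (hφ r (by simp [IPForm.vars]))
  | bot => exact Iff.rfl
  | conj a b iha ihb =>
    exact and_congr (iha (fun r hr => hφ r (by simp [IPForm.vars, hr])) hw)
      (ihb (fun r hr => hφ r (by simp [IPForm.vars, hr])) hw)
  | disj a b iha ihb =>
    exact or_congr (iha (fun r hr => hφ r (by simp [IPForm.vars, hr])) hw)
      (ihb (fun r hr => hφ r (by simp [IPForm.vars, hr])) hw)
  | impl a b iha ihb =>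
    have ha : ∀ r ∈ a.vars, r ∈ q := fun r hr => hφ r (by simp [IPForm.vars, hr])
    have hb : ∀ r ∈ b.vars, r ∈ q := fun r hr => hφ r (by simp [IPForm.vars, hr])
    constructor
    · intro h v' hv' hav'
      obtain ⟨v, hv, hvv'⟩ := (hZ w w' hw).2.2 v' hv'
      exact (ihb hb hvv').1 (h v hv ((iha ha hvv').2 hav'))
    · intro h v hv hav
      obtain ⟨v', hv', hvv'⟩ := (hZ w w' hw).2.1 v hv
      exact (ihb hb hvv').2 (h v' hv' ((iha ha hvv').1 hav))

/-- The amalgam of two models along a relation `Z`: the `Z`-related pairs, ordered componentwise,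
with the variables of `s` valued as in `N` and the remaining ones as in `M`. -/
def amalg (s : Set ℕ) (M N : KModel) (Z : M.W → N.W → Prop) : KModel where
  W := {x : M.W × N.W // Z x.1 x.2}
  rel x y := M.rel x.1.1 y.1.1 ∧ N.rel x.1.2 y.1.2
  refl _ := ⟨M.refl _, N.refl _⟩
  trans h k := ⟨M.trans h.1 k.1, N.trans h.2 k.2⟩
  val r x := (r ∈ s ∧ N.val r x.1.2) ∨ (r ∉ s ∧ M.val r x.1.1)
  mono h := Or.imp (And.imp_right (N.mono h.2)) (And.imp_right (M.mono h.1))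

theorem isBisim_amalg_fst {p : ℕ} {q : Set ℕ} {M N : KModel} {Z : M.W → N.W → Prop}
    (hZ : IsBisim q M N Z) :
    IsBisim {r | r ≠ p} (amalg (insert p q) M N Z) M (fun x w => x.1.1 = w) := by
  rintro ⟨⟨u, v⟩, huv⟩ _ rfl
  refine ⟨fun r hr => ?_, fun x hx => ⟨x.1.1, hx.1, rfl⟩, fun u' hu' => ?_⟩
  · have hr : r ≠ p := hr
    have hagree := (hZ u v huv).1 r
    simp only [amalg, Set.mem_insert_iff, hr, false_or]
    tauto
  · obtain ⟨v', hv', hz⟩ := (hZ u v huv).2.1 u' hu'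
    exact ⟨⟨(u', v'), hz⟩, ⟨hu', hv'⟩, rfl⟩

theorem isBisim_amalg_snd {q s : Set ℕ} {M N : KModel} {Z : M.W → N.W → Prop}
    (hZ : IsBisim q M N Z) :
    IsBisim s (amalg s M N Z) N (fun x w => x.1.2 = w) := by
  rintro ⟨⟨u, v⟩, huv⟩ _ rfl
  refine ⟨fun r hr => ?_, fun x hx => ⟨x.1.2, hx.2, rfl⟩, fun v' hv' => ?_⟩
  · simp [amalg, hr]
  · obtain ⟨u', hu', hz⟩ := (hZ u v huv).2.2 v' hv'
    exact ⟨⟨(u', v'), hz⟩, ⟨hu', hv'⟩, rfl⟩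

/-- **Definability of the universal bisimulation quantifier gives left
uniform interpolants.** -/
theorem definable_Ap_gives_leftUI (p : ℕ) (qbar : Finset ℕ) (hp : p ∉ qbar)
    (φ α : IPForm) (hφ : φ.vars ⊆ insert p qbar) (hα : α.vars ⊆ qbar)
    (h : semC α = Ap qbar (semC φ)) :
    Entails α φ ∧ ∀ ψ : IPForm, p ∉ ψ.vars → Entails ψ φ → Entails ψ α := by
  constructor
  · intro M hM w hw
    have hX : (⟨M, hM, w⟩ : PKModel) ∈ Ap qbar (semC φ) := h ▸ hw
    refine hX ⟨M, hM, w⟩ ⟨Eq, ?_, rfl⟩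
    rintro u _ rfl
    exact ⟨fun _ _ => Iff.rfl, fun v hv => ⟨v, hv, rfl⟩, fun v hv => ⟨v, hv, rfl⟩⟩
  · intro ψ hpψ hψφ M hM w hw
    suffices hX : (⟨M, hM, w⟩ : PKModel) ∈ Ap qbar (semC φ) by
      rw [← h] at hX
      exact hX
    rintro ⟨N, hN, v⟩ ⟨Z, hZ, hwv⟩
    have hfin : Finite (amalg (insert p ↑qbar) M N Z).W :=
      inferInstanceAs (Finite {x : M.W × N.W // Z x.1 x.2})
    let x : (amalg (insert p ↑qbar) M N Z).W := ⟨(w, v), hwv⟩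
    have hxψ : (amalg (insert p ↑qbar) M N Z).Forces x ψ :=
      (forces_iff_of_isBisim (isBisim_amalg_fst (p := p) hZ) ψ
        (fun r hr hrp => hpψ (hrp ▸ hr)) (w := x) rfl).2 hw
    exact (forces_iff_of_isBisim (isBisim_amalg_snd hZ) φ
      (fun r hr => by simpa using hφ hr) (w := x) rfl).1 (hψφ _ hfin x hxψ)
end

section
/- (Right uniform interpolants define the existential bisimulation quantifier.) Let p be a propositional variable, q̄ a finite set of variables not containing p, φ a formula with variables among {p} ∪ q̄, and ε a formula with variables among q̄. If φ ⊨ ε and for every formula θ not containing p, φ ⊨ θ implies ε ⊨ θ, then ⟦ε⟧_{p,q̄} = E_p(⟦φ⟧_{p,q̄}). -/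
open Classical in
/-- The `F`-type of a point: the set of formulas in `F` forced there. -/
noncomputable def KModel.tp (F : Finset IPForm) (M : KModel) (w : M.W) : Finset IPForm :=
  F.filter (fun α => M.Forces w α)

theorem KModel.Forces.persist {M : KModel} {u v : M.W} {a : IPForm}
    (ha : M.Forces u a) (h : M.rel u v) : M.Forces v a := by
  induction a with
  | var p => exact M.mono h ha
  | bot => exact ha
  | conj a b iha ihb => exact ⟨iha ha.1, ihb ha.2⟩
  | disj a b iha ihb => exact ha.imp iha ihb
  | impl a b _ _ => exact fun x hx => ha x (M.trans h hx)

theorem IsBisim.forces_iff {q : Finset ℕ} {M M' : KModel} {Z : M.W → M'.W → Prop}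
    (hZ : IsBisim (↑q) M M' Z) (a : IPForm) (ha : a.vars ⊆ q) :
    ∀ w w', Z w w' → (M.Forces w a ↔ M'.Forces w' a) := by
  induction a with
  | var p =>
    intro w w' h
    exact (hZ w w' h).1 p (by simpa [IPForm.vars] using ha)
  | bot => exact fun _ _ _ => Iff.rfl
  | conj a b iha ihb =>
    have hab := Finset.union_subset_iff.1 ha
    exact fun w w' h => and_congr (iha hab.1 w w' h) (ihb hab.2 w w' h)
  | disj a b iha ihb =>
    have hab := Finset.union_subset_iff.1 ha
    exact fun w w' h => or_congr (iha hab.1 w w' h) (ihb hab.2 w w' h)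
  | impl a b iha ihb =>
    have hab := Finset.union_subset_iff.1 ha
    intro w w' h
    obtain ⟨-, forth, back⟩ := hZ w w' h
    constructor
    · intro H v' hv' hva
      obtain ⟨v, hv, hz⟩ := back v' hv'
      exact (ihb hab.2 v v' hz).1 (H v hv ((iha hab.1 v v' hz).2 hva))
    · intro H v hv hva
      obtain ⟨v', hv', hz⟩ := forth v hv
      exact (ihb hab.2 v v' hz).2 (H v' hv' ((iha hab.1 v v' hz).1 hva))

theorem exists_bigConj {ι : Type} (q : Finset ℕ) (s : Finset ι) (f : ι → IPForm)
    (hf : ∀ i ∈ s, (f i).vars ⊆ q) :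
    ∃ c : IPForm, c.vars ⊆ q ∧
      ∀ (M : KModel) (w : M.W), M.Forces w c ↔ ∀ i ∈ s, M.Forces w (f i) := by
  classical
  induction s using Finset.induction_on with
  | empty =>
    refine ⟨.impl .bot .bot, by simp [IPForm.vars], fun M w => ?_⟩
    simp [KModel.Forces]
  | insert a s _ ih =>
    obtain ⟨c, hc, h⟩ := ih fun i hi => hf i (Finset.mem_insert_of_mem hi)
    refine ⟨.conj (f a) c,
      Finset.union_subset (hf a (Finset.mem_insert_self a s)) hc, fun M w => ?_⟩
    simp [KModel.Forces, h]

theorem exists_bigDisj {ι : Type} (q : Finset ℕ) (s : Finset ι) (f : ι → IPForm)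
    (hf : ∀ i ∈ s, (f i).vars ⊆ q) :
    ∃ c : IPForm, c.vars ⊆ q ∧
      ∀ (M : KModel) (w : M.W), M.Forces w c ↔ ∃ i ∈ s, M.Forces w (f i) := by
  classical
  induction s using Finset.induction_on with
  | empty =>
    refine ⟨.bot, by simp [IPForm.vars], fun M w => ?_⟩
    simp [KModel.Forces]
  | insert a s _ ih =>
    obtain ⟨c, hc, h⟩ := ih fun i hi => hf i (Finset.mem_insert_of_mem hi)
    refine ⟨.disj (f a) c,
      Finset.union_subset (hf a (Finset.mem_insert_self a s)) hc, fun M w => ?_⟩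
    simp [KModel.Forces, h]

/-- Having type `t` is the difference of two definable upsets. -/
theorem exists_typeForms (q : Finset ℕ) (F : Finset IPForm) (hF : ∀ α ∈ F, α.vars ⊆ q)
    (t : Finset IPForm) :
    ∃ G N : IPForm, G.vars ⊆ q ∧ N.vars ⊆ q ∧ (t ⊆ F → ∀ (M : KModel) (w : M.W),
      (M.Forces w G ∧ ¬ M.Forces w N) ↔ M.tp F w = t) := by
  classical
  obtain ⟨G, hG, hG'⟩ := exists_bigConj q (F.filter (· ∈ t)) id
    fun i hi => hF i (Finset.mem_filter.1 hi).1
  obtain ⟨N, hN, hN'⟩ := exists_bigDisj q (F.filter (· ∉ t)) id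
    fun i hi => hF i (Finset.mem_filter.1 hi).1
  refine ⟨G, N, hG, hN, fun ht M w => ?_⟩
  rw [hG', hN', Finset.ext_iff]
  simp only [KModel.tp, Finset.mem_filter, id]
  constructor
  · rintro ⟨h1, h2⟩ α
    refine ⟨fun h => ?_, fun h => ⟨ht h, h1 α ⟨ht h, h⟩⟩⟩
    by_contra hα
    exact h2 ⟨α, ⟨h.1, hα⟩, h.2⟩
  · intro h
    refine ⟨fun α hα => ((h α).2 hα.2).2, ?_⟩
    rintro ⟨α, hα, hw⟩
    exact hα.2 ((h α).1 ⟨hα.1, hw⟩)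

/-- A finite model has a finite set of formulas over `q` that contains `q` and whose types
determine the whole theory over `q` of each point. -/
theorem exists_separating (q : Finset ℕ) (X : KModel) [Finite X.W] :
    ∃ F : Finset IPForm, (∀ α ∈ F, α.vars ⊆ q) ∧ (∀ r ∈ q, IPForm.var r ∈ F) ∧
      ∀ u v : X.W, X.tp F u = X.tp F v → ∀ ψ : IPForm, ψ.vars ⊆ q →
        (X.Forces u ψ ↔ X.Forces v ψ) := by
  classical
  have := Fintype.ofFinite X.W
  have hsep : ∀ uv : X.W × X.W, ∃ α : IPForm, α.vars ⊆ q ∧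
      ((X.Forces uv.1 α ↔ X.Forces uv.2 α) → ∀ ψ : IPForm, ψ.vars ⊆ q →
        (X.Forces uv.1 ψ ↔ X.Forces uv.2 ψ)) := by
    intro uv
    by_cases h : ∀ ψ : IPForm, ψ.vars ⊆ q → (X.Forces uv.1 ψ ↔ X.Forces uv.2 ψ)
    · exact ⟨.bot, by simp [IPForm.vars], fun _ => h⟩
    · push Not at h
      obtain ⟨α, hα, hne⟩ := h
      exact ⟨α, hα, fun h' => by tauto⟩
  choose s hs hs' using hsep
  refine ⟨q.image IPForm.var ∪ Finset.univ.image s, ?_, ?_, ?_⟩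
  · intro α hα
    rcases Finset.mem_union.1 hα with h | h
    · obtain ⟨r, hr, rfl⟩ := Finset.mem_image.1 h
      simpa [IPForm.vars] using hr
    · obtain ⟨uv, -, rfl⟩ := Finset.mem_image.1 h
      exact hs uv
  · exact fun r hr => Finset.mem_union_left _ (Finset.mem_image_of_mem _ hr)
  · intro u v huv
    refine hs' (u, v) ?_
    have hm : s (u, v) ∈ q.image IPForm.var ∪ Finset.univ.image s :=
      Finset.mem_union_right _ (Finset.mem_image_of_mem _ (Finset.mem_univ _))
    have := Finset.ext_iff.1 huv (s (u, v))
    simpa only [KModel.tp, Finset.mem_filter, hm, true_and] using this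

/-- A Jankov–de Jongh formula of a point `w` of a finite model: it is refuted at `w`, and refuting
it at `y` requires a point above `y` bisimilar to `w`. -/
theorem exists_charForm (q : Finset ℕ) (X : KModel) [Finite X.W] (w : X.W) :
    ∃ χ : IPForm, χ.vars ⊆ q ∧ ¬ X.Forces w χ ∧
      ∀ (Y : KModel) (y : Y.W), ¬ Y.Forces y χ →
        ∃ y', Y.rel y y' ∧ Bisimilar ↑q X w Y y' := by
  classical
  have := Fintype.ofFinite X.W
  obtain ⟨F, hF, hqF, hdet⟩ := exists_separating q X
  choose G N hG hN hGN using exists_typeForms q F hF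
  have htpF : ∀ (M : KModel) (v : M.W), M.tp F v ⊆ F := fun M v => Finset.filter_subset _ _
  let R : Finset IPForm → IPForm := fun t => .impl (G t) (N t)
  have hR : ∀ t, (R t).vars ⊆ q := fun t => Finset.union_subset (hG t) (hN t)
  have hRiff : ∀ t ⊆ F, ∀ (M : KModel) (v : M.W),
      ¬ M.Forces v (R t) ↔ ∃ v', M.rel v v' ∧ M.tp F v' = t := by
    intro t ht M v
    simp only [R, KModel.Forces, not_forall, ← hGN t ht, exists_prop]
  let f : X.W × Finset IPForm → IPForm := fun i =>
    if X.Forces i.1 (R i.2) then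
      .impl (G (X.tp F i.1)) (.disj (N (X.tp F i.1)) (R i.2))
    else .impl (R i.2) (R (X.tp F i.1))
  obtain ⟨Γ, hΓ, hΓ'⟩ := exists_bigConj q (Finset.univ ×ˢ F.powerset) f (by
    intro i _
    by_cases h : X.Forces i.1 (R i.2)
    · simp only [f, if_pos h]
      exact Finset.union_subset (hG _) (Finset.union_subset (hN _) (hR _))
    · simp only [f, if_neg h]
      exact Finset.union_subset (hR _) (hR _))
  refine ⟨.impl Γ (R (X.tp F w)), Finset.union_subset hΓ (hR _), ?_, ?_⟩
  -- `w` refutes `χ` because `Γ` is valid in `X`.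
  · intro H
    refine (hRiff _ (htpF X w) X w).2 ⟨w, X.refl w, rfl⟩ (H w (X.refl w) ?_)
    rw [hΓ']
    rintro ⟨x, t⟩ hi
    have ht : t ⊆ F := by simpa using hi
    by_cases h : X.Forces x (R t)
    · simp only [f, if_pos h]
      intro u _ hu
      by_cases hn : X.Forces u (N (X.tp F x))
      · exact Or.inl hn
      · have htp := (hGN _ (htpF X x) X u).1 ⟨hu, hn⟩
        exact Or.inr ((hdet u x htp _ (hR t)).2 h)
    · simp only [f, if_neg h]
      intro u _ hu
      by_contra hn
      obtain ⟨u', huu', htp⟩ := (hRiff _ (htpF X x) X u).1 hn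
      exact h ((hdet u' x htp _ (hR t)).1 (hu.persist huu'))
  -- Equality of types is a bisimulation above a point of type `tp w` that forces `Γ`.
  · intro Y y hy
    simp only [KModel.Forces, not_forall] at hy
    obtain ⟨y₀, hy₀, hyΓ, hyR⟩ := hy
    obtain ⟨y', hy', htp⟩ := (hRiff _ (htpF X w) Y y₀).1 hyR
    have hyΓ' := hyΓ.persist hy'
    refine ⟨y', Y.trans hy₀ hy', fun x v => Y.rel y' v ∧ X.tp F x = Y.tp F v, ?_,
      Y.refl y', htp.symm⟩
    rintro x v ⟨hv, hxv⟩
    have key := (hΓ' Y v).1 (hyΓ'.persist hv)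
    refine ⟨?_, ?_, ?_⟩
    · intro r hr
      have := Finset.ext_iff.1 hxv (.var r)
      simp only [KModel.tp, Finset.mem_filter, hqF r hr, true_and] at this
      exact this
    · intro x' hx'
      have hk := key (x, X.tp F x') (by simpa using htpF X x')
      have hn : ¬ X.Forces x (R (X.tp F x')) := (hRiff _ (htpF X x') X x).2 ⟨x', hx', rfl⟩
      simp only [f, if_neg hn] at hk
      have hvR : ¬ Y.Forces v (R (X.tp F x)) :=
        (hRiff _ (htpF X x) Y v).2 ⟨v, Y.refl v, hxv.symm⟩
      obtain ⟨v', hvv', ht⟩ := (hRiff _ (htpF X x') Y v).1 fun h => hvR (hk v (Y.refl v) h)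
      exact ⟨v', hvv', Y.trans hv hvv', ht.symm⟩
    · intro v' hv'
      have hk := key (x, Y.tp F v') (by simpa using htpF Y v')
      have hn : ¬ X.Forces x (R (Y.tp F v')) := by
        intro hp
        simp only [f, if_pos hp] at hk
        obtain ⟨hg, hnn⟩ := (hGN _ (htpF X x) Y v).2 hxv.symm
        rcases hk v (Y.refl v) hg with h | h
        · exact hnn h
        · exact (hRiff _ (htpF Y v') Y v).2 ⟨v', hv', rfl⟩ h
      obtain ⟨x', hx', ht⟩ := (hRiff _ (htpF Y v') X x).1 hn
      exact ⟨x', hx', Y.trans hv hv', ht⟩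

/-- **Right uniform interpolants define the existential bisimulation
quantifier.** -/
theorem rightUI_defines_Ep (p : ℕ) (qbar : Finset ℕ) (hp : p ∉ qbar)
    (φ ε : IPForm) (hφ : φ.vars ⊆ insert p qbar) (hε : ε.vars ⊆ qbar)
    (h1 : Entails φ ε)
    (h2 : ∀ θ : IPForm, p ∉ θ.vars → Entails φ θ → Entails ε θ) :
    semC ε = Ep qbar (semC φ) := by
  ext X
  have := X.fin
  constructor
  · intro hX
    obtain ⟨χ, hχ, hXχ, hchar⟩ := exists_charForm qbar X.M X.w
    by_contra hno
    refine hXχ (h2 χ (fun h => hp (hχ h)) ?_ X.M X.fin X.w hX)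
    intro M hM y hy
    by_contra hn
    obtain ⟨y', hyy', hb⟩ := hchar M y hn
    exact hno ⟨⟨M, hM, y'⟩, hy.persist hyy', hb⟩
  · rintro ⟨Y, hY, Z, hZ, hz⟩
    exact (hZ.forces_iff ε hε X.w Y.w hz).2 (h1 Y.M Y.fin Y.w hY)
end
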